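/- A topological space X is pre-Hausdorff if and only if the set R_0 = {(x, y) ∈ X × X : x and y are topologically inseparable} equals the closure in X × X of the diagonal {(x, x) : x ∈ X}. -/

import Mathlib

/-- `x` and `y` admit a T₀ separation: some open set contains one of them but not the other. -/
def T0Sep {X : Type*} [TopologicalSpace X] (x y : X) : Prop :=
  ∃ U : Set X, IsOpen U ∧ ((x ∈ U ∧ y ∉ U) ∨ (y ∈ U ∧ x ∉ U))

/-- `x` and `y` admit a T₂ separation: disjoint open sets around them. -/
def T2Sep {X : Type*} [TopologicalSpace X] (x y : X) : Prop :=
  ∃ U V : Set X, IsOpen U ∧ IsOpen V ∧ x ∈ U ∧ y ∈ V ∧ U ∩ V = ∅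

/-- A space is pre-Hausdorff (T₀,₂) if every T₀-separated pair is T₂-separated. -/
def PreHausdorff (X : Type*) [TopologicalSpace X] : Prop :=
  ∀ x y : X, T0Sep x y → T2Sep x y

/-!
A pair `(x, y)` lies in the closure of the diagonal exactly when every neighbourhood of `x` meets
every neighbourhood of `y`. Inseparable pairs always do, having the same neighbourhoods, so only
the inclusion of the closure of the diagonal in `R₀` carries information: it says that
distinguishable points have disjoint neighbourhoods.
-/

open Set Topology

section Separation

variable {X : Type*} [TopologicalSpace X] {x y : X}

theorem t0Sep_iff_not_inseparable : T0Sep x y ↔ ¬ Inseparable x y :=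
  not_inseparable_iff_exists_open.symm

theorem t2Sep_iff_disjoint_nhds : T2Sep x y ↔ Disjoint (𝓝 x) (𝓝 y) := by
  simp only [(nhds_basis_opens x).disjoint_iff (nhds_basis_opens y), disjoint_iff_inter_eq_empty]
  constructor
  · rintro ⟨U, V, hU, hV, hxU, hyV, hUV⟩
    exact ⟨U, ⟨hxU, hU⟩, V, ⟨hyV, hV⟩, hUV⟩
  · rintro ⟨U, ⟨hxU, hU⟩, V, ⟨hyV, hV⟩, hUV⟩
    exact ⟨U, V, hU, hV, hxU, hyV, hUV⟩

theorem mk_mem_closure_diagonal_iff_not_disjoint_nhds :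
    (x, y) ∈ closure (diagonal X) ↔ ¬ Disjoint (𝓝 x) (𝓝 y) := by
  rw [← Filter.compl_diagonal_mem_prod, ← nhds_prod_eq, ← mem_interior_iff_mem_nhds,
    interior_compl, notMem_compl_iff]

end Separation

section R1Space

variable (X : Type*) [TopologicalSpace X]

theorem preHausdorff_iff_r1Space : PreHausdorff X ↔ R1Space X := by
  simp only [PreHausdorff, t0Sep_iff_not_inseparable, t2Sep_iff_disjoint_nhds,
    r1Space_iff_inseparable_or_disjoint_nhds, or_iff_not_imp_left]

theorem setOfPred_inseparable_subset_closure_diagonal :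
    {p : X × X | Inseparable p.1 p.2} ⊆ closure (diagonal X) := by
  rintro ⟨x, y⟩ (hxy : Inseparable x y)
  exact mk_mem_closure_diagonal_iff_not_disjoint_nhds.2 hxy.specializes.not_disjoint

theorem r1Space_iff_closure_diagonal_subset_setOfPred_inseparable :
    R1Space X ↔ closure (diagonal X) ⊆ {p : X × X | Inseparable p.1 p.2} := by
  simp only [r1Space_iff_inseparable_or_disjoint_nhds, subset_def, Prod.forall, mem_ofPred_eq,
    mk_mem_closure_diagonal_iff_not_disjoint_nhds, or_iff_not_imp_right]

end R1Space

/-- A space is pre-Hausdorff iff the inseparability relation R₀ is the closure of the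
diagonal in X × X. -/
theorem preHausdorff_iff_r0_eq_closure_diagonal (X : Type*) [TopologicalSpace X] :
    PreHausdorff X ↔
      {p : X × X | Inseparable p.1 p.2} = closure (Set.diagonal X) := by
  rw [preHausdorff_iff_r1Space, r1Space_iff_closure_diagonal_subset_setOfPred_inseparable]
  exact (setOfPred_inseparable_subset_closure_diagonal X).ge_iff_eq
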